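/- arXiv:2409.08714 — 9 statements merged into one kernel-verified Lean document; each statement's English description precedes it below -/
import Mathlib

section
/- Fix real constants k > 0, c > 0, c0, t, and let f : ℝ → ℝ be given by f(s) = c·β·s²/(2γ) for constants β > 0 and γ > 0. Define the map Φ_t : ℝ³ → ℝ³ by Φ_t(q, s, r) = ( q − c0·t − (1/k)·e^{k(r − f(s))}·sin(k(q − c·t)), s, r + (1/k)·e^{k(r − f(s))}·cos(k(q − c·t)) ). Then Φ_t is differentiable at every point (q, s, r), and the determinant of its (total) derivative at (q, s, r) equals 1 − e^{2k(r − f(s))}; in particular this determinant is independent of t. -/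
/-!
The latitude `s` is only a parameter of the flow, so its Jacobian is the `2 × 2` Jacobian in
`(q, r)`. With `A = e^{k(r - f s)}` and `θ = k(q - ct)` this is the determinant of the symmetric
matrix `!![1 - A cos θ, -A sin θ; -A sin θ, 1 + A cos θ]`, namely `1 - A² (cos² θ + sin² θ)`: the
phase `θ` cancels, and with it the time.
-/

section Determinant

variable {R M : Type*} [CommRing R] [AddCommGroup M] [Module R M] [Module.Free R M]
  [Module.Finite R M]

theorem det_prod_fst_comp_snd_prod (u v : R × M × R →ₗ[R] R) :
    LinearMap.det (u.prod ((LinearMap.fst R M R ∘ₗ LinearMap.snd R R (M × R)).prod v)) =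
      u (1, 0, 0) * v (0, 0, 1) - u (0, 0, 1) * v (1, 0, 0) := by
  classical
  let b := Module.Free.chooseBasis R M
  -- Moving `M` to the end makes the matrix block upper triangular.
  let e : ((R × R) × M) ≃ₗ[R] R × M × R :=
    LinearEquiv.prodAssoc R R R M ≪≫ₗ (LinearEquiv.refl R R).prodCongr (LinearEquiv.prodComm R R M)
  let B := ((Module.Basis.finTwoProd R).prod b).map e
  have e_apply (x : (R × R) × M) : e x = (x.1.1, x.2, x.1.2) := rfl
  have e_symm_apply (x : R × M × R) : e.symm x = ((x.1, x.2.2), x.2.1) := rfl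
  have toMatrix_eq :
      LinearMap.toMatrix B B
          (u.prod ((LinearMap.fst R M R ∘ₗ LinearMap.snd R R (M × R)).prod v)) =
        Matrix.fromBlocks !![u (1, 0, 0), u (0, 0, 1); v (1, 0, 0), v (0, 0, 1)]
          (Matrix.of fun i j => ![u (0, b j, 0), v (0, b j, 0)] i) 0 1 := by
    ext (i | i) (j | j)
    · fin_cases i <;> fin_cases j <;> simp [B, e_apply, e_symm_apply, LinearMap.toMatrix_apply]
    · fin_cases i <;> simp [B, e_apply, e_symm_apply, LinearMap.toMatrix_apply]
    · fin_cases j <;> simp [B, e_apply, e_symm_apply, LinearMap.toMatrix_apply]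
    · simp [B, e_apply, e_symm_apply, LinearMap.toMatrix_apply, Matrix.one_apply,
        Finsupp.single_apply, eq_comm]
  rw [← LinearMap.det_toMatrix B, toMatrix_eq, Matrix.det_fromBlocks_zero₂₁, Matrix.det_fin_two_of,
    Matrix.det_one, mul_one]

end Determinant

section Derivative

variable {V : Type*} [NormedAddCommGroup V] [NormedSpace ℝ V] {k : ℝ} {a b : V → ℝ}
  {a' b' : V →L[ℝ] ℝ} {p : V}

theorem hasFDerivAt_one_div_mul_exp_mul_sin (hk : k ≠ 0) (ha : HasFDerivAt a a' p)
    (hb : HasFDerivAt b b' p) :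
    HasFDerivAt (fun x => 1 / k * Real.exp (k * a x) * Real.sin (k * b x))
      (Real.exp (k * a p) • (Real.sin (k * b p) • a' + Real.cos (k * b p) • b')) p := by
  refine (((ha.const_mul k).exp.const_mul (1 / k)).mul (hb.const_mul k).sin).congr_fderiv ?_
  ext x
  simp only [one_div, add_apply, smul_apply, smul_eq_mul, smul_add]
  field_simp
  ring

theorem hasFDerivAt_one_div_mul_exp_mul_cos (hk : k ≠ 0) (ha : HasFDerivAt a a' p)
    (hb : HasFDerivAt b b' p) :
    HasFDerivAt (fun x => 1 / k * Real.exp (k * a x) * Real.cos (k * b x))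
      (Real.exp (k * a p) • (Real.cos (k * b p) • a' - Real.sin (k * b p) • b')) p := by
  refine (((ha.const_mul k).exp.const_mul (1 / k)).mul (hb.const_mul k).cos).congr_fderiv ?_
  ext x
  simp only [one_div, add_apply, sub_apply, smul_apply, smul_eq_mul, neg_mul, mul_neg]
  field_simp
  ring

end Derivative

/-- The map `(q, s, r) ↦ (x, y, z)` at time `t` of the trapped wave with wavenumber `k`, phase speed
`c`, underlying current `c₀` and decay profile `f`. The latitude `s` ranges over an arbitrary space,
`ℝ` in the physical case. -/
noncomputable def trappedWaveFlow {E : Type*} (k c c₀ t : ℝ) (f : E → ℝ) (p : ℝ × E × ℝ) :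
    ℝ × E × ℝ :=
  (p.1 - c₀ * t - 1 / k * Real.exp (k * (p.2.2 - f p.2.1)) * Real.sin (k * (p.1 - c * t)),
    p.2.1,
    p.2.2 + 1 / k * Real.exp (k * (p.2.2 - f p.2.1)) * Real.cos (k * (p.1 - c * t)))

namespace trappedWaveFlow

variable {E : Type*} [NormedAddCommGroup E] [NormedSpace ℝ E]

/-- The derivative of the first component `x` of `trappedWaveFlow` at a point of amplitude
`A = e^{k(r - f s)}` and phase `θ = k(q - ct)` where `f` has derivative `f'`. -/
noncomputable def fderivX (A θ : ℝ) (f' : E →L[ℝ] ℝ) : ℝ × E × ℝ →L[ℝ] ℝ :=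
  .fst ℝ ℝ (E × ℝ) -
    A • (Real.sin θ • ((.snd ℝ E ℝ - f' ∘L .fst ℝ E ℝ) ∘L .snd ℝ ℝ (E × ℝ)) +
      Real.cos θ • .fst ℝ ℝ (E × ℝ))

/-- The derivative of the last component `z` of `trappedWaveFlow`, in the notation of `fderivX`. -/
noncomputable def fderivZ (A θ : ℝ) (f' : E →L[ℝ] ℝ) : ℝ × E × ℝ →L[ℝ] ℝ :=
  .snd ℝ E ℝ ∘L .snd ℝ ℝ (E × ℝ) +
    A • (Real.cos θ • ((.snd ℝ E ℝ - f' ∘L .fst ℝ E ℝ) ∘L .snd ℝ ℝ (E × ℝ)) -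
      Real.sin θ • .fst ℝ ℝ (E × ℝ))

theorem hasFDerivAt {k : ℝ} (hk : k ≠ 0) (c c₀ t : ℝ) {f : E → ℝ} {f' : E →L[ℝ] ℝ} {s : E}
    (hf : HasFDerivAt f f' s) (q r : ℝ) :
    HasFDerivAt (trappedWaveFlow k c c₀ t f)
      ((fderivX (Real.exp (k * (r - f s))) (k * (q - c * t)) f').prod
        ((.fst ℝ E ℝ ∘L .snd ℝ ℝ (E × ℝ)).prod
          (fderivZ (Real.exp (k * (r - f s))) (k * (q - c * t)) f')))
      (q, s, r) := by
  have hq : HasFDerivAt (fun p : ℝ × E × ℝ => p.1) (.fst ℝ ℝ (E × ℝ)) (q, s, r) := hasFDerivAt_fst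
  have hsr : HasFDerivAt (fun p : ℝ × E × ℝ => p.2) (.snd ℝ ℝ (E × ℝ)) (q, s, r) := hasFDerivAt_snd
  have hdepth : HasFDerivAt (fun p : ℝ × E × ℝ => p.2.2 - f p.2.1)
      ((.snd ℝ E ℝ - f' ∘L .fst ℝ E ℝ) ∘L .snd ℝ ℝ (E × ℝ)) (q, s, r) :=
    hsr.snd.sub (hf.comp (q, s, r) hsr.fst)
  have hphase := hq.sub_const (c * t)
  exact ((hq.sub_const (c₀ * t)).sub (hasFDerivAt_one_div_mul_exp_mul_sin hk hdepth hphase)).prodMk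
    (hsr.fst.prodMk (hsr.snd.add (hasFDerivAt_one_div_mul_exp_mul_cos hk hdepth hphase)))

theorem det_fderivX_prod_fderivZ [FiniteDimensional ℝ E] (A θ : ℝ) (f' : E →L[ℝ] ℝ) :
    ((fderivX A θ f').prod ((.fst ℝ E ℝ ∘L .snd ℝ ℝ (E × ℝ)).prod (fderivZ A θ f'))).det =
      1 - A ^ 2 := by
  calc
    _ = fderivX A θ f' (1, 0, 0) * fderivZ A θ f' (0, 0, 1) -
        fderivX A θ f' (0, 0, 1) * fderivZ A θ f' (1, 0, 0) :=
      det_prod_fst_comp_snd_prod (fderivX A θ f').toLinearMap (fderivZ A θ f').toLinearMap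
    _ = (1 - A * Real.cos θ) * (1 + A * Real.cos θ) -
        -(A * Real.sin θ) * -(A * Real.sin θ) := by
      simp [fderivX, fderivZ]
    _ = 1 - A ^ 2 := by linear_combination -A ^ 2 * Real.sin_sq_add_cos_sq θ

end trappedWaveFlow

theorem stmt0_general {E : Type*} [NormedAddCommGroup E] [NormedSpace ℝ E] [FiniteDimensional ℝ E]
    {k : ℝ} (hk : k ≠ 0) (c c₀ t : ℝ) {f : E → ℝ} {s : E} (hf : DifferentiableAt ℝ f s) (q r : ℝ) :
    DifferentiableAt ℝ (trappedWaveFlow k c c₀ t f) (q, s, r) ∧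
      (fderiv ℝ (trappedWaveFlow k c c₀ t f) (q, s, r)).det =
        1 - Real.exp (2 * k * (r - f s)) := by
  have hflow := trappedWaveFlow.hasFDerivAt hk c c₀ t hf.hasFDerivAt q r
  refine ⟨hflow.differentiableAt, ?_⟩
  rw [hflow.fderiv, trappedWaveFlow.det_fderivX_prod_fderivZ, ← Real.exp_nat_mul, Nat.cast_ofNat,
    mul_assoc]

/-- The Lagrangian flow map of the Equatorially-trapped wave solution with underlying current
is differentiable, and the determinant of its total derivative at `(q, s, r)` equals
`1 - e^{2k(r - f s)}`; in particular it is independent of `t`. -/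
theorem stmt0 (k c c0 t β γ : ℝ) (hk : 0 < k) (hc : 0 < c) (hβ : 0 < β) (hγ : 0 < γ)
    (f : ℝ → ℝ) (hf : ∀ s, f s = c * β * s ^ 2 / (2 * γ))
    (Φ : ℝ × ℝ × ℝ → ℝ × ℝ × ℝ)
    (hΦ : ∀ p : ℝ × ℝ × ℝ, Φ p =
      (p.1 - c0 * t - (1 / k) * Real.exp (k * (p.2.2 - f p.2.1)) * Real.sin (k * (p.1 - c * t)),
       p.2.1,
       p.2.2 + (1 / k) * Real.exp (k * (p.2.2 - f p.2.1)) * Real.cos (k * (p.1 - c * t)))) :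
    ∀ q s r : ℝ, DifferentiableAt ℝ Φ (q, s, r) ∧
      (fderiv ℝ Φ (q, s, r)).det = 1 - Real.exp (2 * k * (r - f s)) := by
  obtain rfl : f = fun s => c * β * s ^ 2 / (2 * γ) := funext hf
  obtain rfl : Φ = trappedWaveFlow k c c0 t fun s => c * β * s ^ 2 / (2 * γ) := funext hΦ
  exact fun _ _ _ => stmt0_general hk.ne' c c0 t (by fun_prop) _ _
end

section
/- Fix k > 0, c > 0, c0 ∈ ℝ, β > 0, γ > 0, r0 < 0 and s ∈ ℝ with s ≠ 0. Set a = cβs²/(2γ) ≥ 0 and define F : ℝ → ℝ by F(r) = e^{2k(r − a)}/(2k) − r + c0·β·s²/(2γ) − e^{2k·r0}/(2k) + r0. Then: (i) F is strictly decreasing on (−∞, a]; (ii) F(r) → +∞ as r → −∞; and (iii) there exists a (necessarily unique) r* < r0 with F(r*) = 0 if and only if e^{2k(r0 − a)}/(2k) + c0·β·s²/(2γ) < e^{2k·r0}/(2k). -/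
/-!
The derivative of `F` is `exp (2k(r - a)) - 1`, negative for `r < a`, and `F r` exceeds `-r` by at
least a constant. A continuous strictly decreasing function on `(-∞, r0]` that tends to `+∞` at
`-∞` vanishes somewhere to the left of `r0` exactly when its value at `r0` is negative, and
`F r0 < 0` is the solvability condition.
-/

open Filter Set

theorem existsUnique_lt_and_eq_iff_of_strictAntiOn {α δ : Type*}
    [ConditionallyCompleteLinearOrder α] [TopologicalSpace α] [OrderTopology α] [DenselyOrdered α]
    [LinearOrder δ] [TopologicalSpace δ] [OrderClosedTopology δ] {f : α → δ} {x₀ : α} {y : δ}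
    (hanti : StrictAntiOn f (Iic x₀)) (hcont : ContinuousOn f (Iic x₀))
    (htop : Tendsto f atBot atTop) :
    (∃! x, x < x₀ ∧ f x = y) ↔ f x₀ < y := by
  constructor
  · rintro ⟨x, ⟨hx, rfl⟩, -⟩
    exact hanti hx.le self_mem_Iic hx
  · intro hy
    have : Nonempty α := ⟨x₀⟩
    obtain ⟨m, hym, hm⟩ := ((htop.eventually_ge_atTop y).and (eventually_le_atBot x₀)).exists
    obtain ⟨x, ⟨-, hx⟩, hxy⟩ :=
      intermediate_value_Ico' hm (hcont.mono Icc_subset_Iic_self) ⟨hy, hym⟩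
    exact ⟨x, ⟨hx, hxy⟩, fun z ⟨hz, hzy⟩ => hanti.injOn hz.le hx.le (hzy.trans hxy.symm)⟩

/-- The function whose zero is the free-surface label, with `κ = 2k` and all the terms that do not
depend on the label `r` collected in the constant `b`. -/
noncomputable def freeSurfaceFun (κ a b r : ℝ) : ℝ :=
  Real.exp (κ * (r - a)) / κ - r + b

namespace freeSurfaceFun

variable {κ : ℝ} (a b : ℝ)

theorem hasDerivAt (hκ : κ ≠ 0) (r : ℝ) :
    HasDerivAt (freeSurfaceFun κ a b) (Real.exp (κ * (r - a)) - 1) r := by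
  have hexp : HasDerivAt (fun r => Real.exp (κ * (r - a)) / κ)
      (Real.exp (κ * (r - a)) * (κ * 1) / κ) r :=
    ((((hasDerivAt_id r).sub_const a).const_mul κ).exp).div_const κ
  rw [mul_one, mul_div_cancel_right₀ _ hκ] at hexp
  exact (hexp.sub (hasDerivAt_id r)).add_const b

theorem continuous (κ : ℝ) : Continuous (freeSurfaceFun κ a b) := by
  unfold freeSurfaceFun
  fun_prop

theorem strictAntiOn (hκ : 0 < κ) : StrictAntiOn (freeSurfaceFun κ a b) (Iic a) := by
  refine strictAntiOn_of_deriv_neg (convex_Iic a) (continuous a b κ).continuousOn fun r hr => ?_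
  rw [interior_Iic, mem_Iio] at hr
  rw [(hasDerivAt a b hκ.ne' r).deriv, sub_neg, Real.exp_lt_one_iff]
  exact mul_neg_of_pos_of_neg hκ (sub_neg.mpr hr)

theorem tendsto_atBot_atTop (hκ : 0 < κ) : Tendsto (freeSurfaceFun κ a b) atBot atTop := by
  refine tendsto_atTop_mono (fun r => ?_)
    (tendsto_atTop_add_const_right atBot b tendsto_neg_atBot_atTop)
  have hexp : 0 < Real.exp (κ * (r - a)) / κ := by positivity
  rw [freeSurfaceFun]
  linarith

variable {a}

theorem existsUnique_lt_and_eq_zero_iff (hκ : 0 < κ) {r₀ : ℝ} (hr₀ : r₀ ≤ a) :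
    (∃! r, r < r₀ ∧ freeSurfaceFun κ a b r = 0) ↔ freeSurfaceFun κ a b r₀ < 0 :=
  existsUnique_lt_and_eq_iff_of_strictAntiOn
    ((strictAntiOn a b hκ).mono (Iic_subset_Iic.mpr hr₀)) (continuous a b κ).continuousOn
    (tendsto_atBot_atTop a b hκ)

end freeSurfaceFun

theorem stmt1_general {k a d r₀ : ℝ} (hk : 0 < k) (hr₀ : r₀ ≤ a) {F : ℝ → ℝ}
    (hF : ∀ r, F r = Real.exp (2 * k * (r - a)) / (2 * k) - r + d
      - Real.exp (2 * k * r₀) / (2 * k) + r₀) :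
    StrictAntiOn F (Iic a) ∧
    Tendsto F atBot atTop ∧
    ((∃! r, r < r₀ ∧ F r = 0) ↔
      Real.exp (2 * k * (r₀ - a)) / (2 * k) + d < Real.exp (2 * k * r₀) / (2 * k)) := by
  have hκ : 0 < 2 * k := by positivity
  have hF_eq : F = freeSurfaceFun (2 * k) a (d - Real.exp (2 * k * r₀) / (2 * k) + r₀) := by
    funext r
    rw [hF, freeSurfaceFun]
    ring
  have hF_neg : F r₀ < 0 ↔
      Real.exp (2 * k * (r₀ - a)) / (2 * k) + d < Real.exp (2 * k * r₀) / (2 * k) := by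
    rw [hF]
    constructor <;> intro h <;> linarith
  rw [← hF_neg, hF_eq]
  exact ⟨freeSurfaceFun.strictAntiOn _ _ hκ, freeSurfaceFun.tendsto_atBot_atTop _ _ hκ,
    freeSurfaceFun.existsUnique_lt_and_eq_zero_iff _ hκ hr₀⟩

/-- Properties of the free-surface defining function `F`: it is strictly decreasing on
`(-∞, a]`, tends to `+∞` as `r → -∞`, and has a (necessarily unique) zero `r* < r0`
if and only if the solvability condition holds. -/
theorem stmt1 (k c c0 β γ r0 s a : ℝ) (hk : 0 < k) (hc : 0 < c) (hβ : 0 < β) (hγ : 0 < γ)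
    (hr0 : r0 < 0) (hs : s ≠ 0) (ha : a = c * β * s ^ 2 / (2 * γ))
    (F : ℝ → ℝ)
    (hF : ∀ r, F r = Real.exp (2 * k * (r - a)) / (2 * k) - r + c0 * β * s ^ 2 / (2 * γ)
      - Real.exp (2 * k * r0) / (2 * k) + r0) :
    StrictAntiOn F (Set.Iic a) ∧
    Filter.Tendsto F Filter.atBot Filter.atTop ∧
    ((∃! r, r < r0 ∧ F r = 0) ↔
      Real.exp (2 * k * (r0 - a)) / (2 * k) + c0 * β * s ^ 2 / (2 * γ)
        < Real.exp (2 * k * r0) / (2 * k)) := by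
  have ha_nonneg : 0 ≤ a := by rw [ha]; positivity
  exact stmt1_general hk (hr0.le.trans ha_nonneg) hF
end

section
/- Fix k > 0, c > 0, β > 0, γ > 0, r0 < 0 and suppose c0 > 0. If there exists ε > 0 such that for all s with 0 < |s| < ε the inequality e^{2k(r0 − cβs²/(2γ))}/(2k) + c0·β·s²/(2γ) < e^{2k·r0}/(2k) holds, then necessarily c0 < c·e^{2k·r0}. -/
/-! For `k > 0` the function `r ↦ e^{2kr} / (2k)` is convex with slope `e^{2k·r0}` at `r0`, so it
lies above its tangent line there. Evaluated at `r0 - c·t` with `t = βs² / (2γ) > 0`, the tangent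
bound turns the solvability condition at a single latitude `s ≠ 0` into `c0·t < c·e^{2k·r0}·t`. -/

theorem exp_mul_one_add_sub_le_exp (x y : ℝ) : Real.exp x * (1 + (y - x)) ≤ Real.exp y :=
  calc
    Real.exp x * (1 + (y - x)) ≤ Real.exp x * Real.exp (y - x) := by
      gcongr
      linarith [Real.add_one_le_exp (y - x)]
    _ = Real.exp y := by rw [← Real.exp_add, add_sub_cancel]

theorem exp_mul_div_add_exp_mul_mul_sub_le {a : ℝ} (ha : 0 < a) (x y : ℝ) :
    Real.exp (a * x) / a + Real.exp (a * x) * (y - x) ≤ Real.exp (a * y) / a :=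
  calc
    Real.exp (a * x) / a + Real.exp (a * x) * (y - x)
        = Real.exp (a * x) * (1 + (a * y - a * x)) / a := by
      field_simp
    _ ≤ Real.exp (a * y) / a := by
      gcongr
      exact exp_mul_one_add_sub_le_exp (a * x) (a * y)

theorem lt_mul_exp_of_exp_mul_sub_div_add_lt {a b c r t : ℝ} (ha : 0 < a) (ht : 0 < t)
    (h : Real.exp (a * (r - c * t)) / a + b * t < Real.exp (a * r) / a) :
    b < c * Real.exp (a * r) := by
  have tangent := exp_mul_div_add_exp_mul_mul_sub_le ha r (r - c * t)
  have scaled : b * t < c * Real.exp (a * r) * t := by linarith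
  exact lt_of_mul_lt_mul_right scaled ht.le

theorem stmt3_general {k c c0 β γ r0 s : ℝ} (hk : 0 < k) (hβγ : 0 < β / γ) (hs : s ≠ 0)
    (h : Real.exp (2 * k * (r0 - c * β * s ^ 2 / (2 * γ))) / (2 * k) + c0 * β * s ^ 2 / (2 * γ)
        < Real.exp (2 * k * r0) / (2 * k)) :
    c0 < c * Real.exp (2 * k * r0) := by
  have ht : 0 < β / γ * (s ^ 2 / 2) := mul_pos hβγ (by positivity)
  have factor (b : ℝ) : b * β * s ^ 2 / (2 * γ) = b * (β / γ * (s ^ 2 / 2)) := by ring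
  rw [factor c, factor c0] at h
  exact lt_mul_exp_of_exp_mul_sub_div_add_lt (by positivity) ht h

/-- For an adverse current `c0 > 0`, if the solvability condition for the free-surface
equation holds for all small nonzero latitudes `s`, then necessarily `c0 < c·e^{2k·r0}`. -/
theorem stmt3 (k c c0 β γ r0 : ℝ) (hk : 0 < k) (hc : 0 < c) (hβ : 0 < β) (hγ : 0 < γ)
    (hr0 : r0 < 0) (hc0 : 0 < c0)
    (h : ∃ ε > 0, ∀ s : ℝ, 0 < |s| → |s| < ε →
      Real.exp (2 * k * (r0 - c * β * s ^ 2 / (2 * γ))) / (2 * k) + c0 * β * s ^ 2 / (2 * γ)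
        < Real.exp (2 * k * r0) / (2 * k)) :
    c0 < c * Real.exp (2 * k * r0) := by
  obtain ⟨ε, hε, h⟩ := h
  obtain ⟨s, hs, hsε⟩ := NormedField.exists_norm_lt ℝ hε
  exact stmt3_general hk (div_pos hβ hγ) (abs_pos.mp hs) (h s hs hsε)
end

section
/- Fix k > 0, c > 0, c0 ∈ ℝ, and real numbers q and ξ. Let L = 2π/k and T = L/c. Then the mean over one wave period of the Lagrangian horizontal velocity, (1/T)·∫₀^T ( c·e^{ξ}·cos(k(q − c·t)) − c0 ) dt, equals −c0. In particular the mean Lagrangian flow velocity is independent of the particle labels: it is westward if c0 > 0, eastward if c0 < 0, and zero if c0 = 0. -/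
open Function MeasureTheory Real

section Antiperiodic

variable {E : Type*} [NormedAddCommGroup E] [NormedSpace ℝ E] {f : ℝ → E} {T : ℝ}

-- Translation by `T` negates the integral, yet preserves it because `f` is `2 * T`-periodic.
theorem intervalIntegral_eq_zero_of_antiperiodic (hf : Antiperiodic f T) (a : ℝ) :
    ∫ t in a..a + 2 * T, f t = 0 := by
  have : IsAddTorsionFree E := .of_isTorsionFree ℝ E
  rw [← self_eq_neg]
  calc ∫ t in a..a + 2 * T, f t
    _ = ∫ t in a + T..a + T + 2 * T, f t :=
        hf.periodic_two_mul.intervalIntegral_add_eq a (a + T)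
    _ = ∫ t in a..a + 2 * T, f (t + T) := by
        rw [intervalIntegral.integral_comp_add_right, add_right_comm]
    _ = -∫ t in a..a + 2 * T, f t := by
        simp only [hf _, intervalIntegral.integral_neg]

theorem intervalAverage_sub_const_eq_neg_of_antiperiodic [CompleteSpace E] (hf : Antiperiodic f T)
    (hT : T ≠ 0) {a : ℝ} (hint : IntervalIntegrable f volume a (a + 2 * T)) (v : E) :
    ⨍ t in a..a + 2 * T, (f t - v) = -v := by
  have hlen : a + 2 * T - a ≠ 0 := by simpa using hT
  rw [interval_average_eq, intervalIntegral.integral_sub hint intervalIntegrable_const,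
    intervalIntegral_eq_zero_of_antiperiodic hf, intervalIntegral.integral_const, zero_sub,
    smul_neg, inv_smul_smul₀ hlen]

end Antiperiodic

theorem antiperiodic_cos_mul_sub_mul {k c : ℝ} (hk : k ≠ 0) (hc : c ≠ 0) (q : ℝ) :
    Antiperiodic (fun t ↦ cos (k * (q - c * t))) (π / (k * c)) := by
  intro t
  have hphase : k * (q - c * (t + π / (k * c))) = k * (q - c * t) - π := by
    field_simp
    ring
  simp only [hphase, cos_sub_pi]

/-- The mean over one wave period of the Lagrangian horizontal velocity
`u = c·e^{ξ}·cos(k(q − ct)) − c0` equals `−c0`, independently of the particle labels. -/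
theorem stmt4 (k c c0 q ξ L T : ℝ) (hk : 0 < k) (hc : 0 < c)
    (hL : L = 2 * Real.pi / k) (hT : T = L / c) :
    (1 / T) * ∫ t in (0:ℝ)..T, (c * Real.exp ξ * Real.cos (k * (q - c * t)) - c0) = -c0 := by
  have hanti : Antiperiodic (fun t ↦ c * exp ξ * cos (k * (q - c * t))) (π / (k * c)) :=
    (antiperiodic_cos_mul_sub_mul hk.ne' hc.ne' q).smul (c * exp ξ)
  have hhalf : π / (k * c) ≠ 0 := by positivity
  have hperiod : T = 0 + 2 * (π / (k * c)) := by
    rw [hT, hL]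
    field_simp
    ring
  have hcont : Continuous fun t ↦ c * exp ξ * cos (k * (q - c * t)) := by fun_prop
  calc (1 / T) * ∫ t in (0:ℝ)..T, (c * exp ξ * cos (k * (q - c * t)) - c0)
    _ = ⨍ t in (0:ℝ)..T, (c * exp ξ * cos (k * (q - c * t)) - c0) := by
        rw [interval_average_eq_div, sub_zero, one_div_mul_eq_div]
    _ = -c0 := by
        rw [hperiod]
        exact intervalAverage_sub_const_eq_neg_of_antiperiodic hanti hhalf
          (hcont.intervalIntegrable _ _) c0
end

section
/- Fix k > 0, c > 0, c0 ∈ ℝ, t ∈ ℝ, F ∈ ℝ, z0 ∈ ℝ, and let L = 2π/k. Suppose R : ℝ → ℝ is differentiable, L-periodic, satisfies z0 = R(q) + (1/k)·e^{k(R(q) − F)}·cos(k(q − c·t)) for all q, and e^{k(R(q) − F)} < 1 for all q. Writing ξ(q) = k(R(q) − F) and θ(q) = k(q − c·t), the following identity holds: (1/L)·∫₀^L ( c + c·e^{ξ(q)}·cos θ(q) − c0 )·( 1 − e^{ξ(q)}·cos θ(q) − e^{ξ(q)}·R'(q)·sin θ(q) ) dq = c − (c/L)·∫₀^L e^{2ξ(q)}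 dq − (c0/L)·∫₀^L (1 − e^{2ξ(q)}) / (1 + e^{ξ(q)}·cos θ(q)) dq. -/
/-!
Write `ξ = k (R - F)` and `θ = k (q - φ)`, with `φ = c t` for the wave at time `t`. The Lagrangian
map sends the label `q` to `x = q - e^ξ sin θ / k`, so that along the profile `R` its Jacobian is
`1 - e^ξ cos θ - e^ξ R' sin θ`. Differentiating the depth relation gives
`R' (1 + e^ξ cos θ) = e^ξ sin θ`, and `sin² θ + cos² θ = 1` turns the Jacobian into
`(1 - e^{2ξ}) / (1 + e^ξ cos θ)`. The velocity factor is `c (1 + e^ξ cos θ) - c₀`: its first part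
cancels the denominator.
-/

section

open Filter MeasureTheory Real Topology

variable {k F φ z₀ : ℝ} {R : ℝ → ℝ}

theorem one_add_exp_mul_cos_pos {ξ : ℝ} (hξ : exp ξ < 1) (θ : ℝ) : 0 < 1 + exp ξ * cos θ := by
  have : -exp ξ ≤ exp ξ * cos θ := by
    simpa using mul_le_mul_of_nonneg_left (neg_one_le_cos θ) (exp_pos ξ).le
  linarith

theorem deriv_mul_one_add_exp_mul_cos_of_const {ξ θ : ℝ → ℝ} {ξ' θ' C q : ℝ}
    (hξ : HasDerivAt ξ ξ' q) (hθ : HasDerivAt θ θ' q)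
    (hconst : ∀ᶠ p in 𝓝 q, ξ p + exp (ξ p) * cos (θ p) = C) :
    ξ' * (1 + exp (ξ q) * cos (θ q)) = θ' * (exp (ξ q) * sin (θ q)) := by
  have hsum : HasDerivAt (fun p => ξ p + exp (ξ p) * cos (θ p))
      (ξ' + (exp (ξ q) * ξ' * cos (θ q) + exp (ξ q) * (-sin (θ q) * θ'))) q :=
    hξ.add (hξ.exp.mul hθ.cos)
  have hzero : HasDerivAt (fun p => ξ p + exp (ξ p) * cos (θ p)) 0 q :=
    (hasDerivAt_const q C).congr_of_eventuallyEq hconst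
  linear_combination hsum.unique hzero

theorem deriv_mul_one_add_exp_mul_cos_of_depth_eq {q : ℝ} (hk : k ≠ 0)
    (hR : DifferentiableAt ℝ R q)
    (hdepth : ∀ᶠ p in 𝓝 q, z₀ = R p + (1 / k) * exp (k * (R p - F)) * cos (k * (p - φ))) :
    deriv R q * (1 + exp (k * (R q - F)) * cos (k * (q - φ))) =
      exp (k * (R q - F)) * sin (k * (q - φ)) := by
  have hξ : HasDerivAt (fun p => k * (R p - F)) (k * deriv R q) q :=
    (hR.hasDerivAt.sub_const F).const_mul k
  have hθ : HasDerivAt (fun p => k * (p - φ)) k q := by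
    simpa using ((hasDerivAt_id q).sub_const φ).const_mul k
  have hconst : ∀ᶠ p in 𝓝 q,
      k * (R p - F) + exp (k * (R p - F)) * cos (k * (p - φ)) = k * (z₀ - F) := by
    filter_upwards [hdepth] with p hp
    rw [hp]
    field_simp
    ring
  refine mul_left_cancel₀ hk ?_
  simpa only [mul_assoc] using deriv_mul_one_add_exp_mul_cos_of_const hξ hθ hconst

theorem one_sub_exp_mul_cos_sub_exp_mul_mul_sin {ξ θ r : ℝ} (hne : 1 + exp ξ * cos θ ≠ 0)
    (hr : r * (1 + exp ξ * cos θ) = exp ξ * sin θ) :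
    1 - exp ξ * cos θ - exp ξ * r * sin θ = (1 - exp (2 * ξ)) / (1 + exp ξ * cos θ) := by
  rw [eq_div_iff hne, two_mul, exp_add]
  linear_combination -exp ξ * sin θ * hr - exp ξ ^ 2 * sin_sq_add_cos_sq θ

theorem velocity_mul_jacobian {ξ θ r : ℝ} (hne : 1 + exp ξ * cos θ ≠ 0)
    (hr : r * (1 + exp ξ * cos θ) = exp ξ * sin θ) (c c₀ : ℝ) :
    (c + c * exp ξ * cos θ - c₀) * (1 - exp ξ * cos θ - exp ξ * r * sin θ) =
      c - c * exp (2 * ξ) - c₀ * ((1 - exp (2 * ξ)) / (1 + exp ξ * cos θ)) := by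
  rw [one_sub_exp_mul_cos_sub_exp_mul_mul_sin hne hr]
  linear_combination c * mul_div_cancel₀ (1 - exp (2 * ξ)) hne

theorem integral_const_sub_const_mul_sub_const_mul {f g : ℝ → ℝ} {a b : ℝ}
    (hf : IntervalIntegrable f volume a b) (hg : IntervalIntegrable g volume a b) (A B C : ℝ) :
    ∫ x in a..b, (A - B * f x - C * g x) =
      A * (b - a) - B * (∫ x in a..b, f x) - C * ∫ x in a..b, g x := by
  rw [intervalIntegral.integral_sub (intervalIntegrable_const.sub (hf.const_mul B))
      (hg.const_mul C),
    intervalIntegral.integral_sub intervalIntegrable_const (hf.const_mul B),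
    intervalIntegral.integral_const, intervalIntegral.integral_const_mul,
    intervalIntegral.integral_const_mul, smul_eq_mul, mul_comm (b - a) A]

theorem integral_velocity_mul_jacobian (hk : k ≠ 0) (hR : Differentiable ℝ R)
    (hdepth : ∀ q, z₀ = R q + (1 / k) * exp (k * (R q - F)) * cos (k * (q - φ)))
    (hne : ∀ q, 1 + exp (k * (R q - F)) * cos (k * (q - φ)) ≠ 0) (c c₀ a b : ℝ) :
    ∫ q in a..b, (c + c * exp (k * (R q - F)) * cos (k * (q - φ)) - c₀) *
        (1 - exp (k * (R q - F)) * cos (k * (q - φ))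
          - exp (k * (R q - F)) * deriv R q * sin (k * (q - φ))) =
      c * (b - a) - c * (∫ q in a..b, exp (2 * (k * (R q - F))))
        - c₀ * ∫ q in a..b, (1 - exp (2 * (k * (R q - F)))) /
            (1 + exp (k * (R q - F)) * cos (k * (q - φ))) := by
  have hRcont : Continuous R := hR.continuous
  have hexp : Continuous fun q => exp (2 * (k * (R q - F))) := by fun_prop
  have hquot : Continuous fun q => (1 - exp (2 * (k * (R q - F)))) /
      (1 + exp (k * (R q - F)) * cos (k * (q - φ))) := by
    fun_prop (disch := exact hne)
  rw [← integral_const_sub_const_mul_sub_const_mul (hexp.intervalIntegrable a b)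
    (hquot.intervalIntegrable a b)]
  exact intervalIntegral.integral_congr fun q _ => velocity_mul_jacobian (hne q)
    (deriv_mul_one_add_exp_mul_cos_of_depth_eq hk (hR q) (.of_forall hdepth)) c c₀

theorem stmt7_general (hk : k ≠ 0) (hR : Differentiable ℝ R)
    (hdepth : ∀ q, z₀ = R q + (1 / k) * exp (k * (R q - F)) * cos (k * (q - φ)))
    (hne : ∀ q, 1 + exp (k * (R q - F)) * cos (k * (q - φ)) ≠ 0)
    (c c₀ : ℝ) {a b : ℝ} (hab : a ≠ b) :
    (1 / (b - a)) * ∫ q in a..b, (c + c * exp (k * (R q - F)) * cos (k * (q - φ)) - c₀) *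
        (1 - exp (k * (R q - F)) * cos (k * (q - φ))
          - exp (k * (R q - F)) * deriv R q * sin (k * (q - φ))) =
      c - (c / (b - a)) * (∫ q in a..b, exp (2 * (k * (R q - F))))
        - (c₀ / (b - a)) * ∫ q in a..b, (1 - exp (2 * (k * (R q - F)))) /
            (1 + exp (k * (R q - F)) * cos (k * (q - φ))) := by
  have hlen : b - a ≠ 0 := sub_ne_zero.mpr hab.symm
  rw [integral_velocity_mul_jacobian hk hR hdepth hne]
  field_simp

end

/-- The change-of-variables identity yielding the mean Eulerian velocity formula:
transforming `(1/L)∫₀^L [c + u] dx` to Lagrangian labels gives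
`c − (c/L)∫₀^L e^{2ξ} dq − (c0/L)∫₀^L (1 − e^{2ξ})/(1 + e^{ξ}cos θ) dq`. -/
theorem stmt7 (k c c0 t F z0 L : ℝ) (hk : 0 < k) (hc : 0 < c) (hL : L = 2 * Real.pi / k)
    (R : ℝ → ℝ) (hR : Differentiable ℝ R) (hper : Function.Periodic R L)
    (heq : ∀ q, z0 = R q + (1 / k) * Real.exp (k * (R q - F)) * Real.cos (k * (q - c * t)))
    (hlt : ∀ q, Real.exp (k * (R q - F)) < 1) :
    (1 / L) * ∫ q in (0:ℝ)..L,
      (c + c * Real.exp (k * (R q - F)) * Real.cos (k * (q - c * t)) - c0) *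
      (1 - Real.exp (k * (R q - F)) * Real.cos (k * (q - c * t))
        - Real.exp (k * (R q - F)) * deriv R q * Real.sin (k * (q - c * t)))
    = c - (c / L) * (∫ q in (0:ℝ)..L, Real.exp (2 * (k * (R q - F))))
      - (c0 / L) * (∫ q in (0:ℝ)..L,
          (1 - Real.exp (2 * (k * (R q - F)))) /
            (1 + Real.exp (k * (R q - F)) * Real.cos (k * (q - c * t)))) := by
  have hL₀ : 0 ≠ L := by rw [hL]; positivity
  simpa only [sub_zero] using stmt7_general hk.ne' hR heq
    (fun q => (one_add_exp_mul_cos_pos (hlt q) _).ne') c c0 hL₀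
end

section
/- Fix k > 0, c > 0, r0 < 0, and let L = 2π/k. Let ξ : ℝ → ℝ be continuous and L-periodic with ξ(q) ≤ k·r0 < 0 for all q, and let θ(q) = k(q − c·t) for a fixed t. If 0 < c0 < c·e^{2k·r0}, then the mean Eulerian velocity ⟨u⟩_E := −(c/L)·∫₀^L e^{2ξ(q)} dq − (c0/L)·∫₀^L (1 − e^{2ξ(q)}) / (1 + e^{ξ(q)}·cos θ(q)) dq satisfies ⟨u⟩_E ≤ −(c0/L)·∫₀^L (1 + e^{3ξ(q)})/(1 + e^{ξ(q)}) dq < 0. That is, for an adverse current (c0 > 0) the mean Eulerian flow velocity is westwards. -/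
/-!
Write `x = e^ξ ∈ (0, 1)` and `y = cos θ ∈ [-1, 1]`. The fraction `(1 - x²) / (1 + x y)` decreases
in `y`, from `1 + x` at `y = -1` to `1 - x` at `y = 1`. The lower bound gives
`x² + (1 - x²) / (1 + x y) ≥ x² + 1 - x = (1 + x³) / (1 + x)`,
and the upper bound makes every integrand bounded, hence integrable. Admissibility forces
`0 < c₀ ≤ c`, so replacing `c` by `c₀` in front of `∫ e^{2ξ}` only increases `⟨u⟩_E`, and the
integrated inequality applies.
-/

open MeasureTheory Set

lemma one_add_cube_div_one_add {K : Type*} [Field K] {x : K} (hx : 1 + x ≠ 0) :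
    (1 + x ^ 3) / (1 + x) = x ^ 2 + (1 - x) := by
  rw [div_eq_iff hx]
  ring

section Pointwise

variable {K : Type*} [Field K] [LinearOrder K] [IsStrictOrderedRing K] {x y : K}

lemma one_add_mul_pos_of_mem_Ico (hx : x ∈ Ico 0 1) (hy : -1 ≤ y) : 0 < 1 + x * y := by
  nlinarith [hx.1, hx.2]

lemma one_sub_le_one_sub_sq_div (hx : x ∈ Ico 0 1) (hy : y ∈ Icc (-1) 1) :
    1 - x ≤ (1 - x ^ 2) / (1 + x * y) := by
  rw [le_div_iff₀ (one_add_mul_pos_of_mem_Ico hx hy.1)]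
  calc (1 - x) * (1 + x * y) ≤ (1 - x) * (1 + x * 1) := by
        gcongr
        exacts [sub_nonneg.2 hx.2.le, hx.1, hy.2]
    _ = 1 - x ^ 2 := by ring

lemma one_sub_sq_div_le_one_add (hx : x ∈ Ico 0 1) (hy : -1 ≤ y) :
    (1 - x ^ 2) / (1 + x * y) ≤ 1 + x := by
  rw [div_le_iff₀ (one_add_mul_pos_of_mem_Ico hx hy)]
  calc 1 - x ^ 2 = (1 + x) * (1 + x * -1) := by ring
    _ ≤ (1 + x) * (1 + x * y) := by
        gcongr
        exacts [add_nonneg zero_le_one hx.1, hx.1]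

lemma one_add_cube_div_le (hx : x ∈ Ico 0 1) (hy : y ∈ Icc (-1) 1) :
    (1 + x ^ 3) / (1 + x) ≤ x ^ 2 + (1 - x ^ 2) / (1 + x * y) := by
  rw [one_add_cube_div_one_add (add_pos_of_pos_of_nonneg one_pos hx.1).ne']
  gcongr
  exact one_sub_le_one_sub_sq_div hx hy

end Pointwise

section Integral

variable {α : Type*} [MeasurableSpace α] {μ : Measure α} [IsFiniteMeasure μ] {X Y : α → ℝ}

lemma integrable_sq_of_mem_Ico (hXm : AEMeasurable X μ) (hX : ∀ᵐ a ∂μ, X a ∈ Ico 0 1) :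
    Integrable (fun a ↦ X a ^ 2) μ := by
  refine .of_mem_Icc 0 1 (by fun_prop) ?_
  filter_upwards [hX] with a ha
  exact ⟨sq_nonneg _, pow_le_one₀ ha.1 ha.2.le⟩

lemma integrable_one_add_cube_div (hXm : AEMeasurable X μ) (hX : ∀ᵐ a ∂μ, X a ∈ Ico 0 1) :
    Integrable (fun a ↦ (1 + X a ^ 3) / (1 + X a)) μ := by
  refine .of_mem_Icc 0 2 (by fun_prop) ?_
  filter_upwards [hX] with a ⟨h0, h1⟩
  refine ⟨by positivity, (div_le_self (by positivity) (by linarith)).trans ?_⟩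
  linarith [pow_le_one₀ (n := 3) h0 h1.le]

lemma integrable_one_sub_sq_div (hXm : AEMeasurable X μ) (hYm : AEMeasurable Y μ)
    (hX : ∀ᵐ a ∂μ, X a ∈ Ico 0 1) (hY : ∀ᵐ a ∂μ, Y a ∈ Icc (-1) 1) :
    Integrable (fun a ↦ (1 - X a ^ 2) / (1 + X a * Y a)) μ := by
  refine .of_mem_Icc 0 2 (by fun_prop) ?_
  filter_upwards [hX, hY] with a hx hy
  exact ⟨(sub_nonneg.2 hx.2.le).trans (one_sub_le_one_sub_sq_div hx hy),
    (one_sub_sq_div_le_one_add hx hy.1).trans (by linarith [hx.2])⟩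

lemma integral_one_add_cube_div_le (hXm : AEMeasurable X μ) (hYm : AEMeasurable Y μ)
    (hX : ∀ᵐ a ∂μ, X a ∈ Ico 0 1) (hY : ∀ᵐ a ∂μ, Y a ∈ Icc (-1) 1) :
    ∫ a, (1 + X a ^ 3) / (1 + X a) ∂μ ≤
      ∫ a, X a ^ 2 ∂μ + ∫ a, (1 - X a ^ 2) / (1 + X a * Y a) ∂μ := by
  have hsq := integrable_sq_of_mem_Ico hXm hX
  have hfrac := integrable_one_sub_sq_div hXm hYm hX hY
  rw [← integral_add hsq hfrac]
  refine integral_mono_ae (integrable_one_add_cube_div hXm hX) (hsq.add hfrac) ?_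
  filter_upwards [hX, hY] with a hx hy using one_add_cube_div_le hx hy

end Integral

lemma exp_mem_Ico_of_neg {s : ℝ} (hs : s < 0) : Real.exp s ∈ Ico 0 1 :=
  ⟨(Real.exp_pos s).le, Real.exp_lt_one_iff.2 hs⟩

lemma exp_two_mul_eq_sq (s : ℝ) : Real.exp (2 * s) = Real.exp s ^ 2 :=
  mod_cast Real.exp_nat_mul s 2

lemma exp_three_mul_eq_cube (s : ℝ) : Real.exp (3 * s) = Real.exp s ^ 3 :=
  mod_cast Real.exp_nat_mul s 3

section Wave

variable {ξ θ : ℝ → ℝ} {L : ℝ}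

lemma integral_one_add_exp_three_mul_div_pos (hL : 0 < L) (hξm : Measurable ξ) (hξ : ∀ q, ξ q < 0) :
    0 < ∫ q in (0 : ℝ)..L, (1 + Real.exp (3 * ξ q)) / (1 + Real.exp (ξ q)) := by
  refine intervalIntegral.intervalIntegral_pos_of_pos ?_ (fun q ↦ by positivity) hL
  rw [intervalIntegrable_iff_integrableOn_Ioc_of_le hL.le]
  simp only [exp_three_mul_eq_cube]
  exact integrable_one_add_cube_div hξm.exp.aemeasurable
    (.of_forall fun q ↦ exp_mem_Ico_of_neg (hξ q))

lemma integral_one_add_exp_three_mul_div_le (hL : 0 ≤ L) (hξm : Measurable ξ) (hθm : Measurable θ)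
    (hξ : ∀ q, ξ q < 0) :
    (∫ q in (0 : ℝ)..L, (1 + Real.exp (3 * ξ q)) / (1 + Real.exp (ξ q))) ≤
      (∫ q in (0 : ℝ)..L, Real.exp (2 * ξ q)) +
        ∫ q in (0 : ℝ)..L, (1 - Real.exp (2 * ξ q)) /
          (1 + Real.exp (ξ q) * Real.cos (θ q)) := by
  simp only [intervalIntegral.integral_of_le hL, exp_two_mul_eq_sq, exp_three_mul_eq_cube]
  exact integral_one_add_cube_div_le hξm.exp.aemeasurable hθm.cos.aemeasurable
    (.of_forall fun q ↦ exp_mem_Ico_of_neg (hξ q)) (.of_forall fun q ↦ Real.cos_mem_Icc (θ q))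

theorem stmt8_general {c c0 : ℝ} (hL : 0 < L) (hξm : Measurable ξ) (hθm : Measurable θ)
    (hξ : ∀ q, ξ q < 0) (hc0 : 0 < c0) (hc0c : c0 ≤ c) :
    -(c / L) * (∫ q in (0 : ℝ)..L, Real.exp (2 * ξ q))
      - (c0 / L) * (∫ q in (0 : ℝ)..L, (1 - Real.exp (2 * ξ q)) /
          (1 + Real.exp (ξ q) * Real.cos (θ q)))
    ≤ -(c0 / L) * (∫ q in (0 : ℝ)..L, (1 + Real.exp (3 * ξ q)) / (1 + Real.exp (ξ q)))
    ∧ -(c0 / L) * (∫ q in (0 : ℝ)..L, (1 + Real.exp (3 * ξ q)) / (1 + Real.exp (ξ q))) < 0 := by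
  have hc0L : 0 < c0 / L := div_pos hc0 hL
  refine ⟨?_, mul_neg_of_neg_of_pos (neg_neg_of_pos hc0L)
    (integral_one_add_exp_three_mul_div_pos hL hξm hξ)⟩
  have hle := integral_one_add_exp_three_mul_div_le hL.le hξm hθm hξ
  have hexp : 0 ≤ ∫ q in (0 : ℝ)..L, Real.exp (2 * ξ q) :=
    intervalIntegral.integral_nonneg hL.le fun q _ ↦ (Real.exp_pos _).le
  set A := ∫ q in (0 : ℝ)..L, Real.exp (2 * ξ q)
  set B := ∫ q in (0 : ℝ)..L, (1 - Real.exp (2 * ξ q)) / (1 + Real.exp (ξ q) * Real.cos (θ q))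
  set D := ∫ q in (0 : ℝ)..L, (1 + Real.exp (3 * ξ q)) / (1 + Real.exp (ξ q))
  calc -(c / L) * A - c0 / L * B ≤ -(c0 / L) * A - c0 / L * B := by gcongr
    _ = -(c0 / L * (A + B)) := by ring
    _ ≤ -(c0 / L * D) := by gcongr
    _ = -(c0 / L) * D := by ring

end Wave

/-- For an adverse current `0 < c0 < c·e^{2k·r0}`, the mean Eulerian flow velocity is
bounded above by `−(c0/L)∫₀^L (1 + e^{3ξ})/(1 + e^{ξ}) dq`, which is strictly negative:
the mean Eulerian flow is westwards. -/
theorem stmt8 (k c c0 t r0 L : ℝ) (hk : 0 < k) (hc : 0 < c) (hr0 : r0 < 0)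
    (hL : L = 2 * Real.pi / k)
    (ξ : ℝ → ℝ) (hξc : Continuous ξ) (hper : Function.Periodic ξ L)
    (hξ : ∀ q, ξ q ≤ k * r0)
    (hc0 : 0 < c0) (hc0' : c0 < c * Real.exp (2 * k * r0)) :
    -(c / L) * (∫ q in (0:ℝ)..L, Real.exp (2 * ξ q))
      - (c0 / L) * (∫ q in (0:ℝ)..L, (1 - Real.exp (2 * ξ q)) /
          (1 + Real.exp (ξ q) * Real.cos (k * (q - c * t))))
    ≤ -(c0 / L) * (∫ q in (0:ℝ)..L, (1 + Real.exp (3 * ξ q)) / (1 + Real.exp (ξ q)))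
    ∧ -(c0 / L) * (∫ q in (0:ℝ)..L, (1 + Real.exp (3 * ξ q)) / (1 + Real.exp (ξ q))) < 0 := by
  have hLpos : 0 < L := hL ▸ by positivity
  have hkr : k * r0 < 0 := mul_neg_of_pos_of_neg hk hr0
  have hc0c : c0 ≤ c :=
    hc0'.le.trans (mul_le_of_le_one_right hc.le (Real.exp_le_one_iff.2 (by linarith)))
  exact stmt8_general hLpos hξc.measurable (by fun_prop) (fun q ↦ (hξ q).trans_lt hkr) hc0 hc0c
end

section
/- Fix k > 0, c > 0, r0 < 0, t ∈ ℝ, F ∈ ℝ, z0 ∈ ℝ, and let L = 2π/k. Suppose R : ℝ → ℝ is differentiable, L-periodic, satisfies R(q) < r0 and z0 = R(q) + (1/k)·e^{k(R(q) − F)}·cos(k(q − c·t)) for all q, with F ≥ 0. Write ξ(q) = k(R(q) − F) and θ(q) = k(q − c·t). If 0 ≤ c0 < c·e^{2k·r0}, then the Stokes drift U^S := (1/L)·∫₀^L ( c·e^{2ξ(q)} − c0 ) dq + (c0/L)·∫₀^L (1 − e^{2ξ(q)}) / (1 + e^{ξ(q)}·cos θ(q)) dq is strictly positive, i.e. the Stokes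 drift is eastwards throughout the fluid domain. -/
/-!
At a fixed depth, the particle with label `q` sits at the abscissa
`x(q) = q - (1/k) e^ξ sin θ`, up to a translation. Differentiating the depth constraint
`ξ + e^ξ cos θ = const` gives `ξ' (1 + e^ξ cos θ) = k e^ξ sin θ`, and hence
`dx/dq = (1 - e^{2ξ}) / (1 + e^ξ cos θ)`, which is exactly the second integrand. Since `x`
advances by one wavelength over a period, that integral equals `L` whatever the wave, the current
`c0` cancels, and the Stokes drift is `(c/L) ∫₀^L e^{2ξ} dq`.
-/

open Real

/-- The horizontal position, at fixed depth and up to a translation, of the particle with label `q`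
in a wave of wavenumber `k` and crest label `a`, where `ξ` is the (dimensionless) depth label. It
converts averages over labels into averages over Eulerian positions. -/
noncomputable def particleAbscissa (k a : ℝ) (ξ : ℝ → ℝ) (q : ℝ) : ℝ :=
  q - exp (ξ q) * sin (k * (q - a)) / k

section FixedDepth

variable {k a m q : ℝ} {ξ : ℝ → ℝ}

lemma one_add_exp_mul_cos_pos_s12 {x : ℝ} (hx : x < 0) (y : ℝ) : 0 < 1 + exp x * cos y := by
  nlinarith [exp_pos x, exp_lt_one_iff.2 hx, neg_one_le_cos y]

lemma hasDerivAt_mul_sub (k a q : ℝ) : HasDerivAt (fun q => k * (q - a)) k q := by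
  simpa using ((hasDerivAt_id q).sub_const a).const_mul k

lemma deriv_mul_one_add_exp_mul_cos (hξ : DifferentiableAt ℝ ξ q)
    (hm : ∀ q, ξ q + exp (ξ q) * cos (k * (q - a)) = m) :
    deriv ξ q * (1 + exp (ξ q) * cos (k * (q - a))) = k * exp (ξ q) * sin (k * (q - a)) := by
  have hderiv := hξ.hasDerivAt.add (hξ.hasDerivAt.exp.mul (hasDerivAt_mul_sub k a q).cos)
  have hconst := (hasDerivAt_const q m).congr_of_eventuallyEq (.of_forall hm)
  linear_combination hderiv.unique hconst

lemma hasDerivAt_particleAbscissa (hk : k ≠ 0) (hξ : DifferentiableAt ℝ ξ q)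
    (hm : ∀ q, ξ q + exp (ξ q) * cos (k * (q - a)) = m)
    (hden : 1 + exp (ξ q) * cos (k * (q - a)) ≠ 0) :
    HasDerivAt (particleAbscissa k a ξ)
      ((1 - exp (2 * ξ q)) / (1 + exp (ξ q) * cos (k * (q - a)))) q := by
  have hderiv := (hasDerivAt_id q).sub
    ((hξ.hasDerivAt.exp.mul (hasDerivAt_mul_sub k a q).sin).div_const k)
  refine hderiv.congr_deriv ?_
  have hsq : exp (2 * ξ q) = exp (ξ q) ^ 2 := by rw [← exp_nat_mul, Nat.cast_ofNat]
  rw [hsq, eq_div_iff hden]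
  field_simp
  linear_combination -exp (ξ q) * sin (k * (q - a)) * deriv_mul_one_add_exp_mul_cos hξ hm
    - k * exp (ξ q) ^ 2 * sin_sq_add_cos_sq (k * (q - a))

lemma particleAbscissa_add_wavelength (hk : k ≠ 0) (hper : Function.Periodic ξ (2 * π / k))
    (q : ℝ) :
    particleAbscissa k a ξ (q + 2 * π / k) = particleAbscissa k a ξ q + 2 * π / k := by
  have hphase : k * (q + 2 * π / k - a) = k * (q - a) + 2 * π := by field_simp; ring
  simp only [particleAbscissa, hper q, hphase, sin_add_two_pi]
  ring

lemma continuous_deriv_particleAbscissa (hξ : Continuous ξ)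
    (hden : ∀ q, 1 + exp (ξ q) * cos (k * (q - a)) ≠ 0) :
    Continuous fun q => (1 - exp (2 * ξ q)) / (1 + exp (ξ q) * cos (k * (q - a))) :=
  Continuous.div (by fun_prop) (by fun_prop) hden

lemma integral_deriv_particleAbscissa (hk : k ≠ 0) (hξ : Differentiable ℝ ξ)
    (hper : Function.Periodic ξ (2 * π / k))
    (hm : ∀ q, ξ q + exp (ξ q) * cos (k * (q - a)) = m)
    (hden : ∀ q, 1 + exp (ξ q) * cos (k * (q - a)) ≠ 0) :
    ∫ q in (0 : ℝ)..2 * π / k, (1 - exp (2 * ξ q)) / (1 + exp (ξ q) * cos (k * (q - a)))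
      = 2 * π / k := by
  rw [intervalIntegral.integral_eq_sub_of_hasDerivAt
    (fun q _ => hasDerivAt_particleAbscissa hk (hξ q) hm (hden q))
    ((continuous_deriv_particleAbscissa hξ.continuous hden).intervalIntegrable _ _)]
  have hadvance := particleAbscissa_add_wavelength (a := a) hk hper 0
  rw [zero_add] at hadvance
  rw [hadvance, add_sub_cancel_left]

theorem stokesDrift_eq (c c0 : ℝ) (hk : k ≠ 0) (hξ : Differentiable ℝ ξ)
    (hper : Function.Periodic ξ (2 * π / k))
    (hm : ∀ q, ξ q + exp (ξ q) * cos (k * (q - a)) = m)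
    (hden : ∀ q, 1 + exp (ξ q) * cos (k * (q - a)) ≠ 0) :
    1 / (2 * π / k) * (∫ q in (0 : ℝ)..2 * π / k, (c * exp (2 * ξ q) - c0))
      + c0 / (2 * π / k) * (∫ q in (0 : ℝ)..2 * π / k,
          (1 - exp (2 * ξ q)) / (1 + exp (ξ q) * cos (k * (q - a))))
      = c / (2 * π / k) * ∫ q in (0 : ℝ)..2 * π / k, exp (2 * ξ q) := by
  have hξc : Continuous ξ := hξ.continuous
  have hmean : ∫ q in (0 : ℝ)..2 * π / k, (c * exp (2 * ξ q) - c0)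
      = c * (∫ q in (0 : ℝ)..2 * π / k, exp (2 * ξ q)) - 2 * π / k * c0 := by
    rw [intervalIntegral.integral_sub (Continuous.intervalIntegrable (by fun_prop) _ _)
      (Continuous.intervalIntegrable (by fun_prop) _ _), intervalIntegral.integral_const_mul,
      intervalIntegral.integral_const, sub_zero, smul_eq_mul]
  rw [hmean, integral_deriv_particleAbscissa hk hξ hper hm hden]
  ring

end FixedDepth

theorem stmt12_general (k c c0 t F z0 L : ℝ) (hk : 0 < k) (hc : 0 < c) (hL : L = 2 * π / k)
    (R : ℝ → ℝ) (hR : Differentiable ℝ R) (hper : Function.Periodic R L)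
    (hRF : ∀ q, R q < F)
    (heq : ∀ q, z0 = R q + (1 / k) * exp (k * (R q - F)) * cos (k * (q - c * t))) :
    0 < (1 / L) * (∫ q in (0 : ℝ)..L, (c * exp (2 * (k * (R q - F))) - c0))
      + (c0 / L) * (∫ q in (0 : ℝ)..L, (1 - exp (2 * (k * (R q - F)))) /
          (1 + exp (k * (R q - F)) * cos (k * (q - c * t)))) := by
  subst hL
  have hneg (q : ℝ) : k * (R q - F) < 0 := mul_neg_of_pos_of_neg hk (sub_neg.2 (hRF q))
  have hdepth (q : ℝ) : k * (R q - F) + exp (k * (R q - F)) * cos (k * (q - c * t))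
      = k * (z0 - F) := by
    rw [heq q]
    field_simp
    ring
  rw [stokesDrift_eq (ξ := fun q => k * (R q - F)) c c0 hk.ne' (by fun_prop)
    (fun q => by simp only [hper q]) hdepth
    (fun q => (one_add_exp_mul_cos_pos_s12 (hneg q) _).ne')]
  have hwavelength : 0 < 2 * π / k := by positivity
  have hRc : Continuous R := hR.continuous
  exact mul_pos (div_pos hc hwavelength) <| intervalIntegral.intervalIntegral_pos_of_pos
    (Continuous.intervalIntegrable (by fun_prop) _ _) (fun _ => exp_pos _) hwavelength

/-- For an adverse (or zero) current `0 ≤ c0 < c·e^{2k·r0}`, the Stokes drift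
`U^S = (1/L)∫₀^L (c·e^{2ξ} − c0) dq + (c0/L)∫₀^L (1 − e^{2ξ})/(1 + e^{ξ}cos θ) dq`
is strictly positive: the Stokes drift is eastwards throughout the fluid domain. -/
theorem stmt12 (k c c0 t F z0 r0 L : ℝ) (hk : 0 < k) (hc : 0 < c) (hr0 : r0 < 0)
    (hF : 0 ≤ F) (hL : L = 2 * Real.pi / k)
    (R : ℝ → ℝ) (hR : Differentiable ℝ R) (hper : Function.Periodic R L)
    (hRr0 : ∀ q, R q < r0)
    (heq : ∀ q, z0 = R q + (1 / k) * Real.exp (k * (R q - F)) * Real.cos (k * (q - c * t)))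
    (hc0 : 0 ≤ c0) (hc0' : c0 < c * Real.exp (2 * k * r0)) :
    0 < (1 / L) * (∫ q in (0:ℝ)..L, (c * Real.exp (2 * (k * (R q - F))) - c0))
      + (c0 / L) * (∫ q in (0:ℝ)..L, (1 - Real.exp (2 * (k * (R q - F)))) /
          (1 + Real.exp (k * (R q - F)) * Real.cos (k * (q - c * t)))) :=
  stmt12_general k c c0 t F z0 L hk hc hL R hR hper
    (fun q => (hRr0 q).trans (hr0.trans_le hF)) heq
end

section
/- Fix k > 0, c > 0, c0 ∈ ℝ, t ∈ ℝ, F ∈ ℝ, and x0 ∈ ℝ. Suppose γ : ℝ → ℝ is differentiable and satisfies, for all r, x0 = γ(r) − c0·t − (1/k)·e^{k(r − F)}·sin(k(γ(r) − c·t)) together with 1 − e^{k(r − F)}·cos(k(γ(r) − c·t)) ≠ 0. Define z(r) = r + (1/k)·e^{k(r − F)}·cos(k(γ(r) − c·t)). Then z is differentiable and for all r, z'(r) = (1 − e^{2ξ(r)}) / (1 − e^{ξ(r)}·cos θ(r)), where ξ(r) = k(r − F) and θ(r) = k(γ(r) − c·t). -/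
/-!
Let `(q, r) ↦ (x, z)` be the map from Lagrangian labels to Eulerian positions. Along a line
`x = x₀` the chain rule gives `x_q q' + x_r = 0`, hence `dz/dr = z_q q' + z_r = J / x_q`, where
`J = x_q z_r - x_r z_q` is the Jacobian determinant. For the trochoidal flow
`x_q = 1 - e^ξ cos θ`, `z_r = 1 + e^ξ cos θ` and `x_r = z_q = -e^ξ sin θ`, so `J = 1 - e^{2ξ}`.
Since `x_q ≠ 0`, a continuous branch `q = γ(r)` is automatically differentiable.
-/

open Filter ContinuousLinearMap
open scoped Topology

section ImplicitDifferentiation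

variable {𝕜 : Type*} [NontriviallyNormedField 𝕜]

theorem hasFDerivAt_of_eventually_apply_eq {E F G : Type*}
    [NormedAddCommGroup E] [NormedSpace 𝕜 E] [NormedAddCommGroup F] [NormedSpace 𝕜 F]
    [NormedAddCommGroup G] [NormedSpace 𝕜 G] {f : E × F → G} {A : E ≃L[𝕜] G} {B : F →L[𝕜] G}
    {γ : F → E} {r : F} {w : G}
    (hf : HasFDerivAt f ((A : E →L[𝕜] G).coprod B) (γ r, r)) (hγ : ContinuousAt γ r)
    (hfγ : ∀ᶠ s in 𝓝 r, f (γ s, s) = w) :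
    HasFDerivAt γ (-((A.symm : G →L[𝕜] E) ∘L B)) r := by
  -- `(u, v) ↦ (A⁻¹ (u - B v), v)` inverts the derivative of `p ↦ (f p, p.2)`.
  let invDeriv : G × F →L[𝕜] E × F :=
    ((A.symm : G →L[𝕜] E) ∘L (fst 𝕜 G F - B ∘L snd 𝕜 G F)).prod (snd 𝕜 G F)
  have hinvDeriv : Function.LeftInverse invDeriv
      (((A : E →L[𝕜] G).coprod B).prod (snd 𝕜 E F)) := fun p => by
    simp [invDeriv]
  have hgraph : HasFDerivAt (fun s => (γ s, s))
      (invDeriv ∘L (0 : F →L[𝕜] G).prod (ContinuousLinearMap.id 𝕜 F)) r :=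
    (hf.prodMk hasFDerivAt_snd).of_comp_of_leftInverse (hγ.prodMk continuousAt_id)
      ((hasFDerivAt_const w r).prodMk (hasFDerivAt_id r))
      (hfγ.mono fun s hs => Prod.ext hs rfl) hinvDeriv
  refine hgraph.fst.congr_fderiv ?_
  ext v
  simp [invDeriv]

variable {f g : 𝕜 × 𝕜 → 𝕜} {a b a' b' w r : 𝕜} {γ : 𝕜 → 𝕜}

theorem hasDerivAt_of_eventually_apply_eq
    (hf : HasFDerivAt f (a • fst 𝕜 𝕜 𝕜 + b • snd 𝕜 𝕜 𝕜) (γ r, r)) (ha : a ≠ 0)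
    (hγ : ContinuousAt γ r) (hfγ : ∀ᶠ s in 𝓝 r, f (γ s, s) = w) :
    HasDerivAt γ (-b / a) r := by
  let A : 𝕜 ≃L[𝕜] 𝕜 := .unitsEquivAut 𝕜 (.mk0 a ha)
  have hf' : HasFDerivAt f ((A : 𝕜 →L[𝕜] 𝕜).coprod (toSpanSingleton 𝕜 b)) (γ r, r) :=
    hf.congr_fderiv (by ext <;> simp [A])
  refine (hasFDerivAt_of_eventually_apply_eq hf' hγ hfγ).hasDerivAt.congr_deriv ?_
  simp [A, div_eq_mul_inv]

theorem hasDerivAt_comp_of_eventually_apply_eq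
    (hf : HasFDerivAt f (a • fst 𝕜 𝕜 𝕜 + b • snd 𝕜 𝕜 𝕜) (γ r, r)) (ha : a ≠ 0)
    (hg : HasFDerivAt g (a' • fst 𝕜 𝕜 𝕜 + b' • snd 𝕜 𝕜 𝕜) (γ r, r))
    (hγ : ContinuousAt γ r) (hfγ : ∀ᶠ s in 𝓝 r, f (γ s, s) = w) :
    HasDerivAt (fun s => g (γ s, s)) ((a * b' - b * a') / a) r := by
  have hγ' : HasDerivAt γ (-b / a) r := hasDerivAt_of_eventually_apply_eq hf ha hγ hfγ
  have hgraph : HasDerivAt (fun s => (γ s, s)) (-b / a, 1) r := hγ'.prodMk (hasDerivAt_id r)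
  refine (HasFDerivAt.comp_hasDerivAt (f := fun s => (γ s, s)) r hg hgraph).congr_deriv ?_
  simp only [add_apply, smul_apply, coe_fst', coe_snd', smul_eq_mul]
  field_simp
  ring

end ImplicitDifferentiation

section TrochoidalFlow

/-- The zonal Eulerian coordinate `x` at time `t` of the particle with Lagrangian labels
`p = (q, r)`, at a fixed latitude `s` that enters only through the constant `F = f(s)`. Its level
sets are the vertical lines along which `z` is differentiated. -/
noncomputable def eulerianX (k c c0 t F : ℝ) (p : ℝ × ℝ) : ℝ :=
  p.1 - c0 * t - (1 / k) * Real.exp (k * (p.2 - F)) * Real.sin (k * (p.1 - c * t))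

/-- The vertical Eulerian coordinate `z` at time `t` of the particle with Lagrangian labels
`p = (q, r)`, in the conventions of `eulerianX`. -/
noncomputable def eulerianZ (k c t F : ℝ) (p : ℝ × ℝ) : ℝ :=
  p.2 + (1 / k) * Real.exp (k * (p.2 - F)) * Real.cos (k * (p.1 - c * t))

theorem trochoidal_jacobian (ξ θ : ℝ) :
    (1 - Real.exp ξ * Real.cos θ) * (1 + Real.exp ξ * Real.cos θ) -
      -(Real.exp ξ * Real.sin θ) * -(Real.exp ξ * Real.sin θ) = 1 - Real.exp (2 * ξ) := by
  rw [two_mul, Real.exp_add]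
  linear_combination -Real.exp ξ ^ 2 * Real.sin_sq_add_cos_sq θ

variable {k : ℝ} (c c0 t F : ℝ)

theorem hasFDerivAt_eulerianX (hk : k ≠ 0) (p : ℝ × ℝ) :
    HasFDerivAt (eulerianX k c c0 t F)
      ((1 - Real.exp (k * (p.2 - F)) * Real.cos (k * (p.1 - c * t))) • fst ℝ ℝ ℝ +
        (-(Real.exp (k * (p.2 - F)) * Real.sin (k * (p.1 - c * t)))) • snd ℝ ℝ ℝ) p := by
  have hξ : HasFDerivAt (fun p : ℝ × ℝ => k * (p.2 - F)) (k • snd ℝ ℝ ℝ) p :=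
    (hasFDerivAt_snd.sub_const F).const_mul k
  have hθ : HasFDerivAt (fun p : ℝ × ℝ => k * (p.1 - c * t)) (k • fst ℝ ℝ ℝ) p :=
    (hasFDerivAt_fst.sub_const (c * t)).const_mul k
  refine ((hasFDerivAt_fst.sub_const (c0 * t)).sub
    ((hξ.exp.const_mul (1 / k)).mul hθ.sin)).congr_fderiv ?_
  ext <;> simp [field]

theorem hasFDerivAt_eulerianZ (hk : k ≠ 0) (p : ℝ × ℝ) :
    HasFDerivAt (eulerianZ k c t F)
      ((-(Real.exp (k * (p.2 - F)) * Real.sin (k * (p.1 - c * t)))) • fst ℝ ℝ ℝ +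
        (1 + Real.exp (k * (p.2 - F)) * Real.cos (k * (p.1 - c * t))) • snd ℝ ℝ ℝ) p := by
  have hξ : HasFDerivAt (fun p : ℝ × ℝ => k * (p.2 - F)) (k • snd ℝ ℝ ℝ) p :=
    (hasFDerivAt_snd.sub_const F).const_mul k
  have hθ : HasFDerivAt (fun p : ℝ × ℝ => k * (p.1 - c * t)) (k • fst ℝ ℝ ℝ) p :=
    (hasFDerivAt_fst.sub_const (c * t)).const_mul k
  refine (hasFDerivAt_snd.add ((hξ.exp.const_mul (1 / k)).mul hθ.cos)).congr_fderiv ?_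
  ext <;> simp [field]

theorem hasDerivAt_eulerianZ_of_eulerianX_eq {γ : ℝ → ℝ} {r x0 : ℝ} (hk : k ≠ 0)
    (hγ : ContinuousAt γ r)
    (hx : ∀ᶠ s in 𝓝 r, eulerianX k c c0 t F (γ s, s) = x0)
    (hden : 1 - Real.exp (k * (r - F)) * Real.cos (k * (γ r - c * t)) ≠ 0) :
    HasDerivAt (fun s => eulerianZ k c t F (γ s, s))
      ((1 - Real.exp (2 * (k * (r - F)))) /
        (1 - Real.exp (k * (r - F)) * Real.cos (k * (γ r - c * t)))) r := by
  rw [← trochoidal_jacobian (k * (r - F)) (k * (γ r - c * t))]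
  exact hasDerivAt_comp_of_eventually_apply_eq (hasFDerivAt_eulerianX c c0 t F hk (γ r, r)) hden
    (hasFDerivAt_eulerianZ c t F hk (γ r, r)) hγ hx

end TrochoidalFlow

theorem stmt14_general (k c c0 t F x0 : ℝ) (hk : k ≠ 0) (γ : ℝ → ℝ) (hγ : Continuous γ)
    (heq : ∀ r, x0 = γ r - c0 * t
      - (1 / k) * Real.exp (k * (r - F)) * Real.sin (k * (γ r - c * t)))
    (hden : ∀ r, 1 - Real.exp (k * (r - F)) * Real.cos (k * (γ r - c * t)) ≠ 0)
    (z : ℝ → ℝ)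
    (hz : ∀ r, z r = r + (1 / k) * Real.exp (k * (r - F)) * Real.cos (k * (γ r - c * t))) :
    Differentiable ℝ z ∧
      ∀ r, deriv z r = (1 - Real.exp (2 * (k * (r - F)))) /
        (1 - Real.exp (k * (r - F)) * Real.cos (k * (γ r - c * t))) := by
  obtain rfl : z = fun r => eulerianZ k c t F (γ r, r) := funext hz
  have hderiv (r : ℝ) := hasDerivAt_eulerianZ_of_eulerianX_eq c c0 t F hk hγ.continuousAt
    (.of_forall fun s => (heq s).symm) (hden r)
  exact ⟨fun r => (hderiv r).differentiableAt, fun r => (hderiv r).deriv⟩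

/-- The vertical coordinate `z(r) = r + (1/k)e^{k(r−F)}cos(k(γ(r)−ct))` along the Eulerian
line `x = x0` is differentiable, with `z'(r) = (1 − e^{2ξ})/(1 − e^{ξ}cos θ)`. -/
theorem stmt14 (k c c0 t F x0 : ℝ) (hk : 0 < k) (hc : 0 < c)
    (γ : ℝ → ℝ) (hγ : Differentiable ℝ γ)
    (heq : ∀ r, x0 = γ r - c0 * t
      - (1 / k) * Real.exp (k * (r - F)) * Real.sin (k * (γ r - c * t)))
    (hden : ∀ r, 1 - Real.exp (k * (r - F)) * Real.cos (k * (γ r - c * t)) ≠ 0)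
    (z : ℝ → ℝ)
    (hz : ∀ r, z r = r + (1 / k) * Real.exp (k * (r - F)) * Real.cos (k * (γ r - c * t))) :
    Differentiable ℝ z ∧
      ∀ r, deriv z r = (1 - Real.exp (2 * (k * (r - F)))) /
        (1 - Real.exp (k * (r - F)) * Real.cos (k * (γ r - c * t))) :=
  stmt14_general k c c0 t F x0 hk.ne' γ hγ.continuous heq hden z hz
end

section
/- Fix k > 0, c > 0, F ≥ 0, and labels r̃ < r0 < 0. Suppose c0 ∈ ℝ satisfies |c0| ≤ c·e^{k(r̃ − F)}. Then the trough mass flux ∫_{r̃}^{r0} ( −c0 − c·e^{k(r − F)} ) · (1 − e^{2k(r − F)}) / (1 + e^{k(r − F)}) dr is strictly negative. -/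
/-!
With `E r = e^{k(r-F)}`, the factor `(1 - E²) / (1 + E)` is `1 - E`, so the flux density is
`-(c0 + c E)(1 - E)`. Below `F` the second factor is positive, and the first increases with `r`
from a nonnegative value at `rt`.
-/

theorem integral_neg_of_neg_on_Ioo {f : ℝ → ℝ} {a b : ℝ}
    (hfi : IntervalIntegrable f MeasureTheory.volume a b)
    (hneg : ∀ x ∈ Set.Ioo a b, f x < 0) (hab : a < b) : ∫ x in a..b, f x < 0 := by
  have hpos : 0 < ∫ x in a..b, -f x :=
    intervalIntegral.intervalIntegral_pos_of_pos_on hfi.neg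
      (fun x hx ↦ neg_pos.mpr (hneg x hx)) hab
  rwa [intervalIntegral.integral_neg, neg_pos] at hpos

theorem one_sub_exp_two_mul_div_one_add_exp (x : ℝ) :
    (1 - Real.exp (2 * x)) / (1 + Real.exp x) = 1 - Real.exp x := by
  have hne : 1 + Real.exp x ≠ 0 := by positivity
  rw [div_eq_iff hne, two_mul, Real.exp_add]
  ring

theorem strictMono_mul_exp_mul_sub {c k : ℝ} (hc : 0 < c) (hk : 0 < k) (F : ℝ) :
    StrictMono fun r : ℝ ↦ c * Real.exp (k * (r - F)) := fun a b hab ↦ by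
  dsimp only
  gcongr

theorem exp_mul_sub_lt_one {k r F : ℝ} (hk : 0 < k) (hr : r < F) : Real.exp (k * (r - F)) < 1 :=
  Real.exp_lt_one_iff.mpr (mul_neg_of_pos_of_neg hk (sub_neg.mpr hr))

theorem stmt19_general {k c c0 F rt r0 : ℝ} (hk : 0 < k) (hc : 0 < c) (h1 : rt < r0)
    (hr0 : r0 ≤ F) (hc0 : -c0 ≤ c * Real.exp (k * (rt - F))) :
    (∫ r in rt..r0, (-c0 - c * Real.exp (k * (r - F))) *
      (1 - Real.exp (2 * (k * (r - F)))) / (1 + Real.exp (k * (r - F)))) < 0 := by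
  simp only [mul_div_assoc, one_sub_exp_two_mul_div_one_add_exp]
  have hcont : Continuous fun r : ℝ ↦
      (-c0 - c * Real.exp (k * (r - F))) * (1 - Real.exp (k * (r - F))) := by fun_prop
  refine integral_neg_of_neg_on_Ioo (hcont.intervalIntegrable rt r0) (fun r hr ↦ ?_) h1
  have hcurrent : -c0 < c * Real.exp (k * (r - F)) :=
    hc0.trans_lt (strictMono_mul_exp_mul_sub hc hk F hr.1)
  have hexp_lt_one : Real.exp (k * (r - F)) < 1 := exp_mul_sub_lt_one hk (hr.2.trans_le hr0)
  exact mul_neg_of_neg_of_pos (sub_neg.mpr hcurrent) (sub_pos.mpr hexp_lt_one)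

/-- For a sufficiently small underlying current, `|c0| ≤ c·e^{k(r̃ − F)}`, the mass flux
between the streamline `r̃` and the free surface `r0` beneath a wave trough is backward:
`∫_{r̃}^{r0} (−c0 − c·e^{k(r−F)})(1 − e^{2k(r−F)})/(1 + e^{k(r−F)}) dr < 0`. -/
theorem stmt19 (k c c0 F rt r0 : ℝ) (hk : 0 < k) (hc : 0 < c) (hF : 0 ≤ F)
    (h1 : rt < r0) (h2 : r0 < 0)
    (hc0 : |c0| ≤ c * Real.exp (k * (rt - F))) :
    (∫ r in rt..r0, (-c0 - c * Real.exp (k * (r - F))) *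
      (1 - Real.exp (2 * (k * (r - F)))) / (1 + Real.exp (k * (r - F)))) < 0 :=
  stmt19_general hk hc h1 (h2.le.trans hF) ((neg_le_abs c0).trans hc0)
end
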